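/- (Lemma 2) Let H : [−3/2, 0] → ℝ be continuous and twice differentiable on (−3/2, 0), with |H′(u)| ≤ k₁ and |H″(u)| ≤ k₂ for all u ∈ (−3/2, 0), for some k₁, k₂ > 0. Let L > 0, M > 1, and let ε ∈ ℝ with |ε| ≤ 1/(2M). Let w₁, w₂ : [0,1/2] → ℝ be continuous, differentiable on (0,1/2) with |wᵢ′| ≤ L there, with w₁(0) = w₂(0) and sup_{[0,1/2]}|wᵢ| ≤ M for i = 1, 2. Set Wᵢ(t) = t − 1 + ε wᵢ(t), so that Wᵢ(s) ∈ [−3/2, 0] for all s ∈ [0,1/2]. Then sup_{t∈(0,1/2)} |(H∘W₁ − H∘W₂)′(t)| ≤ |ε| ((1 + |ε|L) k₂/2 + k₁) · d(w₁, w₂), where d(w₁, w₂) = sup_{t∈(0,1/2)} |w₁′(t) − w₂′(t)|. -/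

import Mathlib

/-- The distance `d(f,g) = sup_{t ∈ (0,1/2)} |f'(t) - g'(t)|`. -/
noncomputable def dd (f g : ℝ → ℝ) : ℝ :=
  ⨆ t : Set.Ioo (0 : ℝ) (1 / 2), |deriv f t.1 - deriv g t.1|

/-!
The chain rule and the splitting
`W₁' H'(W₁) - W₂' H'(W₂) = W₁' (H'(W₁) - H'(W₂)) + (W₁' - W₂') H'(W₂)` reduce the bound to
`W₁' - W₂' = ε (w₁' - w₂')` and to the increment of `H'`. The latter is at most `k₂ |W₁ - W₂|`, and
since `W₁` and `W₂` agree at `0`, the mean value inequality gives `|W₁ - W₂| ≤ |ε| d(w₁, w₂) / 2`;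
this is the source of the factor `1 / 2`.
-/

open Set
open scoped NNReal

section Calculus

variable {E : Type*} [NormedAddCommGroup E]

theorem norm_image_sub_le_of_norm_hasDerivAt_le_of_mem_closure
    {𝕜 : Type*} [RCLike 𝕜] [NormedSpace 𝕜 E]
    {f f' : 𝕜 → E} {s : Set 𝕜} {C : ℝ} {x y : 𝕜} (hs : Convex ℝ s)
    (hfc : ContinuousOn f (closure s)) (hf : ∀ z ∈ s, HasDerivAt f (f' z) z)
    (hC : ∀ z ∈ s, ‖f' z‖ ≤ C) (hx : x ∈ closure s) (hy : y ∈ closure s) :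
    ‖f y - f x‖ ≤ C * ‖y - x‖ := by
  have hmem : ∀ u ∈ s, ∀ v ∈ s, ‖f v - f u‖ ≤ C * ‖v - u‖ := fun u hu v hv ↦
    hs.norm_image_sub_le_of_norm_hasDerivWithin_le (fun z hz ↦ (hf z hz).hasDerivWithinAt) hC hu hv
  have hleft : ∀ u ∈ s, ‖f y - f u‖ ≤ C * ‖y - u‖ := fun u hu ↦
    le_on_closure (hmem u hu) (by fun_prop) (by fun_prop) hy
  exact le_on_closure hleft (by fun_prop) (by fun_prop) hx

theorem norm_deriv_comp_sub_comp_le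
    {𝕜 : Type*} [NontriviallyNormedField 𝕜] [NormedSpace 𝕜 E]
    {H : 𝕜 → E} {W₁ W₂ : 𝕜 → 𝕜} {H₁' H₂' : E} {W₁' W₂' t : 𝕜}
    (hH₁ : HasDerivAt H H₁' (W₁ t)) (hH₂ : HasDerivAt H H₂' (W₂ t))
    (hW₁ : HasDerivAt W₁ W₁' t) (hW₂ : HasDerivAt W₂ W₂' t) :
    ‖deriv (fun s ↦ H (W₁ s) - H (W₂ s)) t‖ ≤
      ‖W₁'‖ * ‖H₁' - H₂'‖ + ‖W₁' - W₂'‖ * ‖H₂'‖ := by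
  have hderiv : deriv (fun s ↦ H (W₁ s) - H (W₂ s)) t = W₁' • H₁' - W₂' • H₂' :=
    ((hH₁.scomp t hW₁).sub (hH₂.scomp t hW₂)).deriv
  calc ‖deriv (fun s ↦ H (W₁ s) - H (W₂ s)) t‖
      = ‖W₁' • (H₁' - H₂') + (W₁' - W₂') • H₂'‖ := by
        rw [hderiv, smul_sub, sub_smul, sub_add_sub_cancel]
    _ ≤ ‖W₁'‖ * ‖H₁' - H₂'‖ + ‖W₁' - W₂'‖ * ‖H₂'‖ := by
        simpa only [norm_smul] using norm_add_le (W₁' • (H₁' - H₂')) ((W₁' - W₂') • H₂')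

theorem norm_deriv_comp_sub_comp_le_of_lipschitzOnWith [NormedSpace ℝ E]
    {H H' : ℝ → E} {U : Set ℝ} {k₁ : ℝ} {k₂ : ℝ≥0} {W₁ W₂ W₁' W₂' : ℝ → ℝ} {a b B D t : ℝ}
    (hH : ∀ u ∈ U, HasDerivAt H (H' u) u) (hk₁ : ∀ u ∈ U, ‖H' u‖ ≤ k₁)
    (hk₂ : LipschitzOnWith k₂ H' U)
    (hW₁c : ContinuousOn W₁ (Icc a b)) (hW₂c : ContinuousOn W₂ (Icc a b))
    (hW₁ : ∀ s ∈ Ioo a b, HasDerivAt W₁ (W₁' s) s)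
    (hW₂ : ∀ s ∈ Ioo a b, HasDerivAt W₂ (W₂' s) s)
    (hWa : W₁ a = W₂ a) (hD : ∀ s ∈ Ioo a b, |W₁' s - W₂' s| ≤ D)
    (ht : t ∈ Ioo a b) (hB : |W₁' t| ≤ B) (hU₁ : W₁ t ∈ U) (hU₂ : W₂ t ∈ U) :
    ‖deriv (fun s ↦ H (W₁ s) - H (W₂ s)) t‖ ≤ (B * k₂ * (b - a) + k₁) * D := by
  have hab : a < b := ht.1.trans ht.2
  have hB₀ : 0 ≤ B := (abs_nonneg _).trans hB
  have hD₀ : 0 ≤ D := (abs_nonneg _).trans (hD t ht)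
  have hW : |W₁ t - W₂ t| ≤ D * (b - a) := by
    have hmvt : |W₁ t - W₂ t - (W₁ a - W₂ a)| ≤ D * |t - a| :=
      norm_image_sub_le_of_norm_hasDerivAt_le_of_mem_closure (f := fun s ↦ W₁ s - W₂ s)
        (convex_Ioo a b) (closure_Ioo hab.ne ▸ hW₁c.sub hW₂c)
        (fun s hs ↦ (hW₁ s hs).sub (hW₂ s hs)) hD
        (closure_Ioo hab.ne ▸ left_mem_Icc.2 hab.le) (subset_closure ht)
    rw [hWa, sub_self, sub_zero, abs_of_pos (sub_pos.2 ht.1)] at hmvt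
    exact hmvt.trans (by gcongr; exact ht.2.le)
  have hH' : ‖H' (W₁ t) - H' (W₂ t)‖ ≤ k₂ * (D * (b - a)) :=
    (hk₂.norm_sub_le hU₁ hU₂).trans (by gcongr; exact hW)
  calc ‖deriv (fun s ↦ H (W₁ s) - H (W₂ s)) t‖
      ≤ |W₁' t| * ‖H' (W₁ t) - H' (W₂ t)‖ + |W₁' t - W₂' t| * ‖H' (W₂ t)‖ :=
        norm_deriv_comp_sub_comp_le (hH _ hU₁) (hH _ hU₂) (hW₁ t ht) (hW₂ t ht)
    _ ≤ B * (k₂ * (D * (b - a))) + D * k₁ := by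
        gcongr
        exacts [hD t ht, hk₁ _ hU₂]
    _ = (B * k₂ * (b - a) + k₁) * D := by ring

end Calculus

theorem abs_deriv_sub_deriv_le_dd {f g : ℝ → ℝ} {A B t : ℝ}
    (hf : ∀ s ∈ Ioo (0 : ℝ) (1 / 2), |deriv f s| ≤ A)
    (hg : ∀ s ∈ Ioo (0 : ℝ) (1 / 2), |deriv g s| ≤ B) (ht : t ∈ Ioo (0 : ℝ) (1 / 2)) :
    |deriv f t - deriv g t| ≤ dd f g := by
  have hbdd : BddAbove (range fun s : Ioo (0 : ℝ) (1 / 2) ↦ |deriv f s - deriv g s|) := by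
    refine ⟨A + B, ?_⟩
    rintro _ ⟨s, rfl⟩
    exact (abs_sub _ _).trans (add_le_add (hf s s.2) (hg s s.2))
  exact le_ciSup hbdd ⟨t, ht⟩

theorem abs_mul_le_half_of_abs_le_one_div {ε M x : ℝ} (hM : 0 < M) (hε : |ε| ≤ 1 / (2 * M))
    (hx : |x| ≤ M) : |ε * x| ≤ 1 / 2 :=
  calc |ε * x| = |ε| * |x| := abs_mul ε x
    _ ≤ 1 / (2 * M) * M := by gcongr
    _ = 1 / 2 := by field_simp

theorem sub_one_add_mem_Icc {s x : ℝ} (hs : s ∈ Icc (0 : ℝ) (1 / 2)) (hx : |x| ≤ 1 / 2) :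
    s - 1 + x ∈ Icc (-(3 / 2) : ℝ) 0 := by
  obtain ⟨hx_lower, hx_upper⟩ := abs_le.1 hx
  constructor <;> linarith [hs.1, hs.2]

theorem sub_one_add_mem_Ioo {s x : ℝ} (hs : s ∈ Ioo (0 : ℝ) (1 / 2)) (hx : |x| ≤ 1 / 2) :
    s - 1 + x ∈ Ioo (-(3 / 2) : ℝ) 0 := by
  obtain ⟨hx_lower, hx_upper⟩ := abs_le.1 hx
  constructor <;> linarith [hs.1, hs.2]

theorem hasDerivAt_sub_const_add_mul {w : ℝ → ℝ} {t : ℝ} (c ε : ℝ)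
    (hw : DifferentiableAt ℝ w t) :
    HasDerivAt (fun s ↦ s - c + ε * w s) (1 + ε * deriv w t) t :=
  ((hasDerivAt_id t).sub_const c).add (hw.hasDerivAt.const_mul ε)

theorem abs_one_add_mul_le {ε x L : ℝ} (hx : |x| ≤ L) : |1 + ε * x| ≤ 1 + |ε| * L :=
  calc |1 + ε * x| ≤ |1| + |ε * x| := abs_add_le _ _
    _ = 1 + |ε| * |x| := by rw [abs_one, abs_mul]
    _ ≤ 1 + |ε| * L := by gcongr

theorem composition_derivative_difference_bound_general
    {E : Type*} [NormedAddCommGroup E] [NormedSpace ℝ E]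
    {H : ℝ → E} {k₁ L M ε : ℝ} {k₂ : ℝ≥0} (hM : 0 < M)
    (hH : ∀ u ∈ Ioo (-(3 / 2) : ℝ) 0, DifferentiableAt ℝ H u ∧ ‖deriv H u‖ ≤ k₁)
    (hH' : LipschitzOnWith k₂ (deriv H) (Ioo (-(3 / 2)) 0))
    (hε : |ε| ≤ 1 / (2 * M)) {w₁ w₂ : ℝ → ℝ}
    (hw₁c : ContinuousOn w₁ (Icc 0 (1 / 2)))
    (hw₁ : ∀ t ∈ Ioo (0 : ℝ) (1 / 2), DifferentiableAt ℝ w₁ t ∧ |deriv w₁ t| ≤ L)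
    (hw₂c : ContinuousOn w₂ (Icc 0 (1 / 2)))
    (hw₂ : ∀ t ∈ Ioo (0 : ℝ) (1 / 2), DifferentiableAt ℝ w₂ t ∧ |deriv w₂ t| ≤ L)
    (h0 : w₁ 0 = w₂ 0)
    (hb₁ : ∀ t ∈ Icc (0 : ℝ) (1 / 2), |w₁ t| ≤ M)
    (hb₂ : ∀ t ∈ Icc (0 : ℝ) (1 / 2), |w₂ t| ≤ M) :
    (∀ s ∈ Icc (0 : ℝ) (1 / 2),
      s - 1 + ε * w₁ s ∈ Icc (-(3 / 2) : ℝ) 0 ∧ s - 1 + ε * w₂ s ∈ Icc (-(3 / 2) : ℝ) 0) ∧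
    ∀ t ∈ Ioo (0 : ℝ) (1 / 2),
      ‖deriv (fun s ↦ H (s - 1 + ε * w₁ s) - H (s - 1 + ε * w₂ s)) t‖ ≤
        |ε| * ((1 + |ε| * L) * k₂ / 2 + k₁) * dd w₁ w₂ := by
  have hεw₁ : ∀ s ∈ Icc (0 : ℝ) (1 / 2), |ε * w₁ s| ≤ 1 / 2 := fun s hs ↦
    abs_mul_le_half_of_abs_le_one_div hM hε (hb₁ s hs)
  have hεw₂ : ∀ s ∈ Icc (0 : ℝ) (1 / 2), |ε * w₂ s| ≤ 1 / 2 := fun s hs ↦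
    abs_mul_le_half_of_abs_le_one_div hM hε (hb₂ s hs)
  refine ⟨fun s hs ↦ ⟨sub_one_add_mem_Icc hs (hεw₁ s hs), sub_one_add_mem_Icc hs (hεw₂ s hs)⟩,
    fun t ht ↦ ?_⟩
  have hD : ∀ s ∈ Ioo (0 : ℝ) (1 / 2),
      |(1 + ε * deriv w₁ s) - (1 + ε * deriv w₂ s)| ≤ |ε| * dd w₁ w₂ := fun s hs ↦ by
    rw [add_sub_add_left_eq_sub, ← mul_sub, abs_mul]
    gcongr
    exact abs_deriv_sub_deriv_le_dd (fun r hr ↦ (hw₁ r hr).2) (fun r hr ↦ (hw₂ r hr).2) hs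
  calc ‖deriv (fun s ↦ H (s - 1 + ε * w₁ s) - H (s - 1 + ε * w₂ s)) t‖
      ≤ ((1 + |ε| * L) * k₂ * (1 / 2 - 0) + k₁) * (|ε| * dd w₁ w₂) :=
        norm_deriv_comp_sub_comp_le_of_lipschitzOnWith
          (fun u hu ↦ (hH u hu).1.hasDerivAt) (fun u hu ↦ (hH u hu).2) hH'
          (by fun_prop) (by fun_prop)
          (fun s hs ↦ hasDerivAt_sub_const_add_mul 1 ε (hw₁ s hs).1)
          (fun s hs ↦ hasDerivAt_sub_const_add_mul 1 ε (hw₂ s hs).1)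
          (by rw [h0]) hD ht (abs_one_add_mul_le (hw₁ t ht).2)
          (sub_one_add_mem_Ioo ht (hεw₁ t (Ioo_subset_Icc_self ht)))
          (sub_one_add_mem_Ioo ht (hεw₂ t (Ioo_subset_Icc_self ht)))
    _ = |ε| * ((1 + |ε| * L) * k₂ / 2 + k₁) * dd w₁ w₂ := by ring

/-- Lemma 2: for `H` continuous on `[-3/2,0]`, twice differentiable on
`(-3/2,0)` with `|H'| ≤ k₁`, `|H''| ≤ k₂`, and `w₁, w₂ ∈ C^{0,L}_0`-type functions with
common value at `0`, sup bounded by `M`, and `|ε| ≤ 1/(2M)`, setting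
`Wᵢ(t) = t - 1 + ε wᵢ(t)` (which lands in `[-3/2,0]`), one has
`sup_{(0,1/2)} |(H∘W₁ - H∘W₂)'| ≤ |ε| ((1 + |ε|L) k₂/2 + k₁) d(w₁,w₂)`. -/
theorem composition_derivative_difference_bound
    (H : ℝ → ℝ) (k₁ k₂ L M ε : ℝ)
    (hk₁ : 0 < k₁) (hk₂ : 0 < k₂) (hL : 0 < L) (hM : 1 < M)
    (hHc : ContinuousOn H (Set.Icc (-(3 / 2)) 0))
    (hH : ∀ u ∈ Set.Ioo (-(3 / 2) : ℝ) 0,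
      DifferentiableAt ℝ H u ∧ |deriv H u| ≤ k₁ ∧
        DifferentiableAt ℝ (deriv H) u ∧ |deriv (deriv H) u| ≤ k₂)
    (hε : |ε| ≤ 1 / (2 * M))
    (w₁ w₂ : ℝ → ℝ)
    (hw₁c : ContinuousOn w₁ (Set.Icc 0 (1 / 2)))
    (hw₁ : ∀ t ∈ Set.Ioo (0 : ℝ) (1 / 2), DifferentiableAt ℝ w₁ t ∧ |deriv w₁ t| ≤ L)
    (hw₂c : ContinuousOn w₂ (Set.Icc 0 (1 / 2)))
    (hw₂ : ∀ t ∈ Set.Ioo (0 : ℝ) (1 / 2), DifferentiableAt ℝ w₂ t ∧ |deriv w₂ t| ≤ L)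
    (h0 : w₁ 0 = w₂ 0)
    (hb₁ : ∀ t ∈ Set.Icc (0 : ℝ) (1 / 2), |w₁ t| ≤ M)
    (hb₂ : ∀ t ∈ Set.Icc (0 : ℝ) (1 / 2), |w₂ t| ≤ M) :
    (∀ s ∈ Set.Icc (0 : ℝ) (1 / 2),
      s - 1 + ε * w₁ s ∈ Set.Icc (-(3 / 2) : ℝ) 0 ∧
      s - 1 + ε * w₂ s ∈ Set.Icc (-(3 / 2) : ℝ) 0) ∧
    ∀ t ∈ Set.Ioo (0 : ℝ) (1 / 2),
      |deriv (fun s => H (s - 1 + ε * w₁ s) - H (s - 1 + ε * w₂ s)) t| ≤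
        |ε| * ((1 + |ε| * L) * k₂ / 2 + k₁) * dd w₁ w₂ := by
  have hH' : LipschitzOnWith ⟨k₂, hk₂.le⟩ (deriv H) (Ioo (-(3 / 2)) 0) :=
    (convex_Ioo _ _).lipschitzOnWith_of_nnnorm_deriv_le
      (fun u hu ↦ (hH u hu).2.2.1) (fun u hu ↦ (hH u hu).2.2.2)
  exact composition_derivative_difference_bound_general (zero_lt_one.trans hM)
    (fun u hu ↦ ⟨(hH u hu).1, (hH u hu).2.1⟩) hH' hε hw₁c hw₁ hw₂c hw₂ h0 hb₁ hb₂
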